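/- Let H = (V, H) be a finite hypergraph with adjacency matrix A, let W ∈ ℝ^{N_R×N_R} be a matrix, and let f, g : ℝ → ℝ be differentiable at 0 with f(0) = 0 and g(0) = 0. Define τ : (ℝ^{N_R})^V → (ℝ^{N_R})^V vertex-wise by τ(x)(v) = f(W·∑_{h ∈ H with v ∈ h} g(∑_{w ∈ h, w ≠ v} x(w))) (the Model 1 transition with null input u = 0). Then τ is Fréchet differentiable at x = 0 and its derivative there is the linear map given by the matrix f′(0)·g′(0)·(A ⊗ W). -/

import Mathlib

open Finset Matrix Kronecker

/-!
The transition is a composite of three layers. The neighbourhood aggregation acts on each column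
`x(·, j)` separately; its derivative at `0` replaces `g` by `g'(0)`, and a vertex `w` then
contributes to `v` once for every hyperedge containing both, which gives `g'(0) • A`. Mixing the
columns by `W` turns this into `g'(0) • (A ⊗ W)`. Since `g 0 = 0`, every coordinate of this inner
map vanishes at `0`, so the outer `f` contributes the scalar `f'(0)`.
-/

section Kronecker

variable {l m n o R : Type*} [Fintype m] [Fintype n] [CommSemiring R]

theorem kronecker_mulVec_apply (A : Matrix l m R) (B : Matrix o n R) (x : m × n → R)
    (i : l) (k : o) :
    ((A ⊗ₖ B) *ᵥ x) (i, k) = (B *ᵥ fun j => (A *ᵥ fun w => x (w, j)) i) k := by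
  simp only [mulVec, dotProduct, kroneckerMap_apply, Fintype.sum_prod_type_right, mul_sum]
  exact sum_congr rfl fun j _ => sum_congr rfl fun w _ => by ring

end Kronecker

section Hypergraph

variable {V R : Type*} [DecidableEq V]

/-- The adjacency matrix of the hypergraph with hyperedges `E`: off the diagonal it counts the
hyperedges containing both vertices, and its diagonal is zero. -/
def hypergraphAdjMatrix (R : Type*) [NatCast R] [Zero R] (E : Finset (Finset V)) :
    Matrix V V R :=
  of fun v w => if v = w then 0 else (#{h ∈ E | v ∈ h ∧ w ∈ h} : R)

/-- One round of message passing on a scalar signal `y`: every hyperedge through `v` sends to `v`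
the value of `g` at the sum of `y` over its other vertices. -/
def neighborAggregate [AddCommMonoid R] (E : Finset (Finset V)) (g : R → R)
    (y : V → R) (v : V) : R :=
  ∑ h ∈ E with v ∈ h, g (∑ w ∈ h.erase v, y w)

theorem neighborAggregate_zero [AddCommMonoid R] (E : Finset (Finset V)) {g : R → R}
    (hg : g 0 = 0) : neighborAggregate E g 0 = 0 := by
  ext v
  simp [neighborAggregate, hg]

theorem neighborAggregate_id [Fintype V] [NonAssocSemiring R] (E : Finset (Finset V)) (y : V → R) :
    neighborAggregate E id y = hypergraphAdjMatrix R E *ᵥ y := by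
  ext v
  calc ∑ h ∈ E with v ∈ h, ∑ w ∈ h.erase v, y w
      = ∑ h ∈ E with v ∈ h, ∑ w, if w ∈ h.erase v then y w else 0 := by
        simp only [sum_ite_mem, univ_inter]
    _ = ∑ w, ∑ h ∈ E with v ∈ h, if w ∈ h.erase v then y w else 0 := sum_comm
    _ = ∑ w, hypergraphAdjMatrix R E v w * y w := sum_congr rfl fun w _ => by
        rcases eq_or_ne v w with rfl | hvw
        · simp [hypergraphAdjMatrix]
        · simp [hypergraphAdjMatrix, hvw, hvw.symm, ← sum_filter, filter_filter]

end Hypergraph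

section Derivatives

variable {𝕜 : Type*} [NontriviallyNormedField 𝕜]

theorem hasFDerivAt_comp_componentwise {H ι : Type*} [NormedAddCommGroup H] [NormedSpace 𝕜 H]
    [Finite ι] {φ : 𝕜 → 𝕜} {φ' : 𝕜} {u : H → ι → 𝕜} {u' : H →L[𝕜] ι → 𝕜} {x : H}
    (hφ : ∀ i, HasDerivAt φ φ' (u x i)) (hu : HasFDerivAt u u' x) :
    HasFDerivAt (fun y i => φ (u y i)) (φ' • u') x :=
  hasFDerivAt_pi'.2 fun i => (hφ i).comp_hasFDerivAt x (hasFDerivAt_pi'.1 hu i)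

variable [CompleteSpace 𝕜]

theorem hasFDerivAt_toLp_comp_ofLp {m n : Type*} [Fintype m] [Fintype n] [DecidableEq n]
    (p q : ENNReal) [Fact (1 ≤ p)] [Fact (1 ≤ q)] {F : (n → 𝕜) → m → 𝕜} {M : Matrix m n 𝕜}
    {x : PiLp p fun _ : n => 𝕜}
    (hF : HasFDerivAt F (LinearMap.toContinuousLinearMap M.mulVecLin) (WithLp.ofLp x)) :
    HasFDerivAt (fun y : PiLp p fun _ : n => 𝕜 => WithLp.toLp q (F (WithLp.ofLp y)))
      (LinearMap.toContinuousLinearMap (toLpLin p q M)) x :=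
  (PiLp.hasFDerivAt_toLp q _).comp x (hF.comp x (PiLp.hasFDerivAt_ofLp p x))

theorem hasFDerivAt_mulVec_columns {l m n o : Type*} [Finite l] [Fintype m] [Fintype n] [Finite o]
    {N : (m → 𝕜) → l → 𝕜} {A : Matrix l m 𝕜} (B : Matrix o n 𝕜) {x : m × n → 𝕜}
    (hN : ∀ j, HasFDerivAt N (LinearMap.toContinuousLinearMap A.mulVecLin) fun w => x (w, j)) :
    HasFDerivAt (fun (y : m × n → 𝕜) (p : l × o) => (B *ᵥ fun j => N (fun w => y (w, j)) p.1) p.2)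
      (LinearMap.toContinuousLinearMap (A ⊗ₖ B).mulVecLin) x := by
  refine hasFDerivAt_pi'.2 fun ⟨i, k⟩ => ?_
  let column (j : n) : (m × n → 𝕜) →L[𝕜] m → 𝕜 := .pi fun w => .proj (w, j)
  have entry (j : n) : HasFDerivAt (fun y : m × n → 𝕜 => N (fun w => y (w, j)) i)
      (.proj i ∘L LinearMap.toContinuousLinearMap A.mulVecLin ∘L column j) x :=
    HasFDerivAt.comp (f := column j) x (hasFDerivAt_pi'.1 (hN j) i) (column j).hasFDerivAt
  refine (HasFDerivAt.fun_sum fun j _ => (entry j).const_mul (B k j)).congr_fderiv ?_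
  ext1 y
  simpa [column, mulVec, dotProduct] using (kronecker_mulVec_apply A B y i k).symm

theorem hasFDerivAt_neighborAggregate {V : Type*} [Fintype V] [DecidableEq V]
    (E : Finset (Finset V)) {g : 𝕜 → 𝕜} {g' : 𝕜} (hg : HasDerivAt g g' 0) :
    HasFDerivAt (neighborAggregate E g)
      (LinearMap.toContinuousLinearMap (g' • hypergraphAdjMatrix 𝕜 E).mulVecLin) 0 := by
  refine hasFDerivAt_pi'.2 fun v => ?_
  let sumOthers (h : Finset V) : (V → 𝕜) →L[𝕜] 𝕜 := ∑ w ∈ h.erase v, .proj w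
  have edge (h : Finset V) :
      HasFDerivAt (fun y : V → 𝕜 => g (∑ w ∈ h.erase v, y w)) (g' • sumOthers h) 0 :=
    HasDerivAt.comp_hasFDerivAt (h₂ := g) 0 (by simpa using hg)
      (HasFDerivAt.fun_sum fun w _ => hasFDerivAt_apply w 0)
  refine (HasFDerivAt.fun_sum fun h _ => edge h).congr_fderiv ?_
  ext1 y
  have linearized := congrFun (neighborAggregate_id E y) v
  simp [sumOthers, ← linearized, neighborAggregate, mul_sum]

end Derivatives

section Transition

variable {V ι R 𝕜 : Type*} [Fintype V] [DecidableEq V] [Fintype ι]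

/-- The Model 1 transition of a hypergraph echo state network with null input. A state
`x : V × ι → R` stores the `ι`-indexed feature vector of `v` as `x (v, ·)`. -/
def esnTransition [NonUnitalNonAssocSemiring R] (E : Finset (Finset V)) (W : Matrix ι ι R)
    (f g : R → R) (x : V × ι → R) (p : V × ι) : R :=
  f ((W *ᵥ fun j => neighborAggregate E g (fun w => x (w, j)) p.1) p.2)

theorem stmt_13_general [DecidableEq ι] [NontriviallyNormedField 𝕜] [CompleteSpace 𝕜]
    (p : ENNReal) [Fact (1 ≤ p)] (E : Finset (Finset V)) (W : Matrix ι ι 𝕜)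
    {f g : 𝕜 → 𝕜} {f' g' : 𝕜} (hf : HasDerivAt f f' 0) (hg : HasDerivAt g g' 0)
    (hg0 : g 0 = 0) :
    HasFDerivAt
      (fun x : PiLp p fun _ : V × ι => 𝕜 => WithLp.toLp p (esnTransition E W f g (WithLp.ofLp x)))
      (LinearMap.toContinuousLinearMap
        (toLpLin p p ((f' * g') • (hypergraphAdjMatrix 𝕜 E ⊗ₖ W)))) 0 := by
  have mixed := hasFDerivAt_mulVec_columns W (x := (0 : V × ι → 𝕜))
    fun _ => hasFDerivAt_neighborAggregate E hg
  have mixed_zero (q : V × ι) :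
      (W *ᵥ fun _ => neighborAggregate E g (0 : V → 𝕜) q.1) q.2 = 0 := by
    simp [neighborAggregate_zero E hg0, mulVec, dotProduct]
  have transition := hasFDerivAt_comp_componentwise (φ := f) (φ' := f')
    (fun q => (mixed_zero q).symm ▸ hf) mixed
  refine hasFDerivAt_toLp_comp_ofLp p p (transition.congr_fderiv ?_)
  ext1 x
  simp [smul_kronecker, mul_smul]

end Transition

/-- The Model 1 HypergraphESN transition with null input,
`τ(x)(v) = f(W·∑_{h ∋ v} g(∑_{w ∈ h, w ≠ v} x(w)))`, with `f`, `g` differentiable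
at `0` and `f(0) = g(0) = 0`, is Fréchet differentiable at `x = 0` with derivative
the linear map of the matrix `f′(0)·g′(0)·(A ⊗ W)`. -/
theorem stmt_13 {V : Type*} [Fintype V] [DecidableEq V]
    (E : Finset (Finset V)) (hE : ∀ h ∈ E, h.Nonempty)
    (A : Matrix V V ℝ)
    (hA : ∀ v w, A v w =
      if v = w then 0 else ((E.filter fun h => v ∈ h ∧ w ∈ h).card : ℝ))
    (NR : ℕ) (W : Matrix (Fin NR) (Fin NR) ℝ)
    (f g : ℝ → ℝ)
    (hf : DifferentiableAt ℝ f 0) (hg : DifferentiableAt ℝ g 0)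
    (hf0 : f 0 = 0) (hg0 : g 0 = 0)
    (τ : EuclideanSpace ℝ (V × Fin NR) → EuclideanSpace ℝ (V × Fin NR))
    (hτ : ∀ x : EuclideanSpace ℝ (V × Fin NR), ∀ (v : V) (k : Fin NR),
      τ x (v, k) = f (W.mulVec (fun j => ∑ h ∈ E.filter (fun h => v ∈ h),
        g (∑ w ∈ h.erase v, x (w, j))) k)) :
    HasFDerivAt τ
      (LinearMap.toContinuousLinearMap
        (Matrix.toEuclideanLin ((deriv f 0 * deriv g 0) • (A ⊗ₖ W)))) 0 := by
  obtain rfl : A = hypergraphAdjMatrix ℝ E := Matrix.ext hA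
  obtain rfl : τ = fun x => WithLp.toLp 2 (esnTransition E W f g (WithLp.ofLp x)) := by
    ext x ⟨v, k⟩
    exact hτ x v k
  exact stmt_13_general 2 E W hf.hasDerivAt hg.hasDerivAt hg0
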